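/- Let K be a field, n ≥ 1, I ⊆ {1,…,n}, i ∈ I, and let σ = σ_{I,i} be the blow-up chart substitution on K[X_1,…,X_n]. For a nonzero polynomial h, let μ_e(h) denote the largest m ∈ ℕ with X_e^m dividing h, and let μ_I(h) denote the largest m ∈ ℕ such that h belongs to the m-th power of the ideal generated by {X_j : j ∈ I}. Then for every nonzero h ∈ K[X_1,…,X_n]: σ(h) ≠ 0; μ_i(σ(h)) = μ_I(h); and μ_e(σ(h)) = μ_e(h) for every e ≠ i. Consequently, if μ ≤ μ_I(h) and h' := σ(h)/X_i^{μ}, then μ_i(h') = μ_I(h) − μ and μ_e(h') = μ_e(h) for all e ≠ i. -/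

import Mathlib

open MvPolynomial

/-!
The chart substitution sends `X ^ a` to `X_i ^ d * X ^ a`, where `d` is the degree of `X ^ a` in the
variables `X_j` with `j ∈ I \ {i}`. On exponents this is an injective map, so no cancellation occurs
and the support of `σ h` is the image of the support of `h`. It fixes the exponent of `X_e` for
`e ≠ i` and makes the exponent of `X_i` equal to the degree in the variables of `I`. Orders along
coordinate hyperplanes and along the centre are minima over the support of precisely these numbers.
-/

theorem ne_zero_of_isGreatest_pow_dvd {M : Type*} [MonoidWithZero M] {x p : M} {k : ℕ}
    (hk : IsGreatest {m : ℕ | x ^ m ∣ p} k) : p ≠ 0 := by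
  rintro rfl
  exact absurd (hk.2 (dvd_zero (x ^ (k + 1)))) (Nat.not_succ_le_self k)

theorem isGreatest_pow_dvd_of_pow_mul {M : Type*} [Monoid M] {x q : M} (hx : IsLeftRegular x)
    {k N : ℕ} (hN : IsGreatest {m : ℕ | x ^ m ∣ x ^ k * q} N) :
    IsGreatest {m : ℕ | x ^ m ∣ q} (N - k) := by
  have dvd_iff (m : ℕ) : x ^ m ∣ q ↔ x ^ (k + m) ∣ x ^ k * q := by
    rw [pow_add, (hx.pow k).dvd_cancel_left]
  have hkN : k ≤ N := hN.2 (dvd_mul_right _ _)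
  refine ⟨(dvd_iff _).2 ?_, fun m hm ↦ Nat.le_sub_of_add_le' (hN.2 ((dvd_iff m).1 hm))⟩
  rw [Nat.add_sub_cancel' hkN]
  exact hN.1

section DegreeIn

variable {ι : Type*}

open scoped Classical in
/-- The degree of the monomial `X ^ a` in the variables indexed by `I`, which is its order of
vanishing along `{X_j = 0 : j ∈ I}`. -/
noncomputable def degreeIn (I : Set ι) : (ι →₀ ℕ) →+ ℕ :=
  Finsupp.degree.comp (Finsupp.filterAddHom (· ∈ I))

theorem degreeIn_apply (I : Set ι) [DecidablePred (· ∈ I)] (a : ι →₀ ℕ) :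
    degreeIn I a = (a.filter (· ∈ I)).degree := by
  simp only [degreeIn, Finsupp.filterAddHom, AddMonoidHom.comp_apply, AddMonoidHom.coe_mk,
    ZeroHom.coe_mk]
  congr!

theorem degreeIn_single (I : Set ι) [DecidablePred (· ∈ I)] (j : ι) (k : ℕ) :
    degreeIn I (Finsupp.single j k) = if j ∈ I then k else 0 := by
  rw [degreeIn_apply]
  split_ifs with hj <;> simp [hj]

theorem le_filter_iff {M : Type*} [AddCommMonoid M] [PartialOrder M] [CanonicallyOrderedAdd M]
    {P : ι → Prop} [DecidablePred P] {a b : ι →₀ M} :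
    b ≤ a.filter P ↔ b ≤ a ∧ ∀ j ∈ b.support, P j := by
  simp only [Finsupp.le_def, Finsupp.filter_apply, Finsupp.mem_support_iff, ← forall_and]
  refine forall_congr' fun j ↦ ?_
  split_ifs with hj
  · simp only [hj, implies_true, and_true]
  · grind [nonpos_iff_eq_zero, zero_le]

theorem le_degreeIn_iff {I : Set ι} {m : ℕ} {a : ι →₀ ℕ} :
    m ≤ degreeIn I a ↔ ∃ b : ι →₀ ℕ, (b.degree = m ∧ ↑b.support ⊆ I) ∧ b ≤ a := by
  classical
  rw [degreeIn_apply]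
  constructor
  · intro hm
    obtain ⟨b, hb, rfl⟩ := Finsupp.exists_le_degree_eq (a.filter (· ∈ I)) m hm
    obtain ⟨hba, hbI⟩ := le_filter_iff.1 hb
    exact ⟨b, ⟨rfl, hbI⟩, hba⟩
  · rintro ⟨b, ⟨rfl, hbI⟩, hba⟩
    exact Finsupp.degree_mono (le_filter_iff.2 ⟨hba, hbI⟩)

theorem degreeIn_diff_singleton_add {I : Set ι} {i : ι} (hi : i ∈ I) (a : ι →₀ ℕ) :
    degreeIn (I \ {i}) a + a i = degreeIn I a := by
  classical
  have filter_eq : a.filter (· ∈ I) = a.filter (· ∈ I \ {i}) + Finsupp.single i (a i) := by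
    ext j
    by_cases hj : j = i <;> simp [Finsupp.filter_apply, hj, hi]
  rw [degreeIn_apply, degreeIn_apply, filter_eq, map_add, Finsupp.degree_single]

end DegreeIn

section Order

variable {ι R : Type*} [CommSemiring R]

theorem X_pow_dvd_iff_forall_le {e : ι} {m : ℕ} {p : MvPolynomial ι R} :
    X e ^ m ∣ p ↔ ∀ a ∈ p.support, m ≤ a e := by
  have monomial_ideal :=
    mem_ideal_span_monomial_image (x := p) (s := {Finsupp.single e m})
  simpa only [Set.image_singleton, Ideal.mem_span_singleton, ← X_pow_eq_monomial,
    Set.mem_singleton_iff, exists_eq_left, Finsupp.single_le_iff] using monomial_ideal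

theorem support_X_pow_mul (i : ι) (k : ℕ) (p : MvPolynomial ι R) :
    (X i ^ k * p).support = p.support.map (addLeftEmbedding (Finsupp.single i k)) := by
  rw [X_pow_eq_monomial]
  exact AddMonoidAlgebra.support_coeff_single_mul p 1 (by simp) _

theorem X_pow_dvd_X_pow_mul_iff_of_ne {e i : ι} (hei : e ≠ i) {k m : ℕ} {p : MvPolynomial ι R} :
    X e ^ m ∣ X i ^ k * p ↔ X e ^ m ∣ p := by
  simp [X_pow_dvd_iff_forall_le, support_X_pow_mul, Finsupp.single_eq_of_ne hei]

theorem mem_span_X_image_pow_iff {I : Set ι} {m : ℕ} {p : MvPolynomial ι R} :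
    p ∈ Ideal.span (X '' I : Set (MvPolynomial ι R)) ^ m ↔ ∀ a ∈ p.support, m ≤ degreeIn I a := by
  have span_pow : Ideal.span (X '' I : Set (MvPolynomial ι R)) ^ m =
      Ideal.span ((fun b ↦ monomial b 1) '' {b | b.degree = m ∧ ↑b.support ⊆ I}) := by
    rw [Ideal.span, Submodule.span_pow, Finsupp.image_pow_eq_finsuppProd_image]
    simp only [monomial_eq, C_1, one_mul]
  simp only [span_pow, mem_ideal_span_monomial_image, le_degreeIn_iff, Set.mem_ofPred_eq]

end Order

section BlowupChart

variable {ι R : Type*} [CommSemiring R] {I : Set ι} {i e : ι}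

open scoped Classical in
/-- The substitution `σ_{I,i}` describing the blow-up with centre `{X_j = 0 : j ∈ I}` in the chart
where `X_i` is the equation of the exceptional hypersurface. -/
noncomputable def blowupChart (I : Set ι) (i : ι) : MvPolynomial ι R →ₐ[R] MvPolynomial ι R :=
  aeval fun j ↦ if j ∈ I \ {i} then X i * X j else X j

theorem blowupChart_X (I : Set ι) (i j : ι) [Decidable (j ∈ I \ {i})] :
    blowupChart I i (X j : MvPolynomial ι R) = if j ∈ I \ {i} then X i * X j else X j := by
  simp only [blowupChart, aeval_X]
  congr

theorem eq_blowupChart [DecidableEq ι] [DecidablePred (· ∈ I)]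
    {σ : MvPolynomial ι R →ₐ[R] MvPolynomial ι R}
    (hσ : ∀ j, σ (X j) = if j = i then X i else if j ∈ I then X i * X j else X j) :
    σ = blowupChart I i := by
  refine algHom_ext fun j ↦ ?_
  rw [hσ, blowupChart_X]
  by_cases hj : j = i <;> simp [hj]

/-- The map on exponents induced by `blowupChart`, which sends `X ^ a` to
`X ^ (chartExponent I i a)`. -/
noncomputable def chartExponent (I : Set ι) (i : ι) : (ι →₀ ℕ) →+ (ι →₀ ℕ) :=
  (Finsupp.singleAddHom i).comp (degreeIn (I \ {i})) + AddMonoidHom.id _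

theorem chartExponent_apply_of_ne (he : e ≠ i) (a : ι →₀ ℕ) : chartExponent I i a e = a e := by
  simp [chartExponent, Finsupp.single_eq_of_ne he]

theorem chartExponent_single (I : Set ι) (i j : ι) (k : ℕ) [DecidablePred (· ∈ I \ {i})] :
    chartExponent I i (Finsupp.single j k) =
      Finsupp.single i (if j ∈ I \ {i} then k else 0) + Finsupp.single j k := by
  simp only [chartExponent, AddMonoidHom.add_apply, AddMonoidHom.comp_apply, degreeIn_single,
    Finsupp.singleAddHom_apply, AddMonoidHom.id_apply]

theorem chartExponent_apply_self (hi : i ∈ I) (a : ι →₀ ℕ) :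
    chartExponent I i a i = degreeIn I a := by
  simp [chartExponent, degreeIn_diff_singleton_add hi]

theorem chartExponent_injective (I : Set ι) (i : ι) :
    Function.Injective (chartExponent I i) := by
  classical
  intro a b hab
  have eq_of_ne (e : ι) (he : e ≠ i) : a e = b e := by
    rw [← chartExponent_apply_of_ne he a, hab, chartExponent_apply_of_ne he b]
  have degree_eq : degreeIn (I \ {i}) a = degreeIn (I \ {i}) b := by
    rw [degreeIn_apply, degreeIn_apply]
    congr 1
    ext j
    by_cases hj : j = i <;> simp [Finsupp.filter_apply, hj, eq_of_ne]
  simpa [chartExponent, degree_eq] using hab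

theorem blowupChart_eq_mapDomainAlgHom :
    (blowupChart I i : MvPolynomial ι R →ₐ[R] MvPolynomial ι R) =
      AddMonoidAlgebra.mapDomainAlgHom R R (chartExponent I i) := by
  classical
  refine algHom_ext fun j ↦ ?_
  have mapDomain_X : AddMonoidAlgebra.mapDomainAlgHom R R (chartExponent I i)
      (X j : MvPolynomial ι R) = monomial (chartExponent I i (Finsupp.single j 1)) 1 :=
    AddMonoidAlgebra.mapDomain_single
  rw [blowupChart_X, mapDomain_X, chartExponent_single]
  split_ifs <;> simp [X, monomial_mul]

theorem support_blowupChart [DecidableEq ι] (p : MvPolynomial ι R) :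
    (blowupChart I i p).support = p.support.image (chartExponent I i) := by
  rw [blowupChart_eq_mapDomainAlgHom]
  exact Finsupp.mapDomain_support_of_injective (chartExponent_injective I i) _

theorem X_pow_dvd_blowupChart_iff_of_ne (he : e ≠ i) {m : ℕ} {p : MvPolynomial ι R} :
    X e ^ m ∣ blowupChart I i p ↔ X e ^ m ∣ p := by
  classical
  simp only [X_pow_dvd_iff_forall_le, support_blowupChart, Finset.forall_mem_image,
    chartExponent_apply_of_ne he]

theorem X_pow_dvd_blowupChart_iff_mem_span_pow (hi : i ∈ I) {m : ℕ} {p : MvPolynomial ι R} :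
    X i ^ m ∣ blowupChart I i p ↔ p ∈ Ideal.span (X '' I : Set (MvPolynomial ι R)) ^ m := by
  classical
  simp only [X_pow_dvd_iff_forall_le, support_blowupChart, Finset.forall_mem_image,
    chartExponent_apply_self hi, mem_span_X_image_pow_iff]

end BlowupChart

theorem stmt_6_general {ι R : Type*} [CommSemiring R] {I : Set ι} {i : ι} (hi : i ∈ I)
    {h : MvPolynomial ι R} {μI : ℕ}
    (hμI : IsGreatest {m : ℕ | h ∈ Ideal.span (X '' I : Set (MvPolynomial ι R)) ^ m} μI) :
    blowupChart I i h ≠ 0 ∧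
    IsGreatest {m : ℕ | X i ^ m ∣ blowupChart I i h} μI ∧
    (∀ e : ι, e ≠ i → ∀ μe : ℕ,
      IsGreatest {m : ℕ | X e ^ m ∣ h} μe →
      IsGreatest {m : ℕ | X e ^ m ∣ blowupChart I i h} μe) ∧
    ∀ (μ : ℕ) (h' : MvPolynomial ι R), blowupChart I i h = X i ^ μ * h' →
      IsGreatest {m : ℕ | X i ^ m ∣ h'} (μI - μ) ∧
      ∀ e : ι, e ≠ i → ∀ μe : ℕ,
        IsGreatest {m : ℕ | X e ^ m ∣ h} μe →
        IsGreatest {m : ℕ | X e ^ m ∣ h'} μe := by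
  have order_exceptional : IsGreatest {m : ℕ | X i ^ m ∣ blowupChart I i h} μI := by
    simpa only [X_pow_dvd_blowupChart_iff_mem_span_pow hi] using hμI
  refine ⟨ne_zero_of_isGreatest_pow_dvd order_exceptional, order_exceptional,
    fun e he μe hμe ↦ ?_, fun μ h' hh' ↦ ⟨?_, fun e he μe hμe ↦ ?_⟩⟩
  · simpa only [X_pow_dvd_blowupChart_iff_of_ne he] using hμe
  · rw [hh'] at order_exceptional
    exact isGreatest_pow_dvd_of_pow_mul isRegular_X.left order_exceptional
  · have dvd_iff (m : ℕ) : X e ^ m ∣ h' ↔ X e ^ m ∣ h := by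
      rw [← X_pow_dvd_X_pow_mul_iff_of_ne he, ← hh', X_pow_dvd_blowupChart_iff_of_ne he]
    simpa only [dvd_iff] using hμe

/-- **Computational core of Lemma 3.7 (Bierstone–Milman,
"Desingularization algorithms I").**
For the blow-up chart substitution `σ = σ_{I,i}` and a nonzero polynomial
`h`, let `μ_I(h)` be the largest `m` with `h` in the `m`-th power of the
ideal `(X_j : j ∈ I)` (the order of `h` along the centre), and `μ_e(·)`
the largest `m` with `X_e^m` dividing (the order along `{X_e = 0}`).
Then `σ(h) ≠ 0`, `μ_i(σ(h)) = μ_I(h)`, `μ_e(σ(h)) = μ_e(h)` for `e ≠ i`;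
and if `μ ≤ μ_I(h)` and `h' = σ(h)/X_i^μ`, then
`μ_i(h') = μ_I(h) - μ` and `μ_e(h') = μ_e(h)` for all `e ≠ i`.
("largest" is formalized by `IsGreatest`.) -/
theorem stmt_6 {K : Type*} [Field K] {n : ℕ} (hn : 1 ≤ n)
    (I : Finset (Fin n)) (i : Fin n) (hi : i ∈ I)
    (σ : MvPolynomial (Fin n) K →ₐ[K] MvPolynomial (Fin n) K)
    (hσ : ∀ j : Fin n, σ (X j) =
      if j = i then X i else if j ∈ I then X i * X j else X j)
    (h : MvPolynomial (Fin n) K) (hh : h ≠ 0)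
    (μI : ℕ)
    (hμI : IsGreatest {m : ℕ |
      h ∈ (Ideal.span (X '' (I : Set (Fin n)) :
        Set (MvPolynomial (Fin n) K))) ^ m} μI) :
    σ h ≠ 0 ∧
    IsGreatest {m : ℕ | X i ^ m ∣ σ h} μI ∧
    (∀ e : Fin n, e ≠ i → ∀ μe : ℕ,
      IsGreatest {m : ℕ | X e ^ m ∣ h} μe →
      IsGreatest {m : ℕ | X e ^ m ∣ σ h} μe) ∧
    ∀ μ : ℕ, μ ≤ μI → ∀ h' : MvPolynomial (Fin n) K, σ h = X i ^ μ * h' →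
      IsGreatest {m : ℕ | X i ^ m ∣ h'} (μI - μ) ∧
      ∀ e : Fin n, e ≠ i → ∀ μe : ℕ,
        IsGreatest {m : ℕ | X e ^ m ∣ h} μe →
        IsGreatest {m : ℕ | X e ^ m ∣ h'} μe := by
  obtain rfl := eq_blowupChart (I := (I : Set (Fin n))) hσ
  have ⟨ne_zero, exceptional, strict, transform⟩ := stmt_6_general hi hμI
  exact ⟨ne_zero, exceptional, strict, fun μ _ ↦ transform μ⟩
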